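/- arXiv:2407.10830 — 8 statements merged into one kernel-verified Lean document; each statement's English description precedes it below -/
import Mathlib

section
/- Let G=(V,E) be a finite directed graph with edge-vertex incidence matrix B, let c ∈ ℝ^E be edge costs and d ∈ ℝ^V demands. If there exists f ∈ ℝ^E with f ≥ 0 and Bᵀf = d (the primal transshipment problem is feasible) and there exists y ∈ ℝ^V with c − By ≥ 0 (the dual is feasible), then strong duality holds: min_{Bᵀf = d, f ≥ 0} ⟨c, f⟩ = max_{c − By ≥ 0} ⟨d, y⟩, and both optimum values are attained. -/
/-!
Primal feasibility, dual feasibility and `⟨c, f⟩ ≤ ⟨d, y⟩` together form a single finite system of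
linear inequalities in `(f, y)`; by weak duality (`weak_duality`) any solution of it is a pair of
optima with equal values. Farkas' lemma (`farkas`) reduces solvability to a statement about
multipliers `(z, g, t)` with `g ≥ 0`, `t ≥ 0`, `B z + t c ≥ 0` and `Bᵀ g = t d`: one needs
`⟨d, z⟩ + ⟨c, g⟩ ≥ 0` (`multiplier_nonneg`). For `t > 0` this is weak duality for the rescaled pair
`(g / t, -z / t)`; for `t = 0` it follows by pairing `z` with a feasible flow and `g` with a
feasible potential.

Farkas' lemma is proved for finitely many linear forms on an arbitrary real vector space, by
induction on the number of forms, which avoids any closedness argument.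
-/

open Finset

namespace Transshipment

/-- **Farkas' lemma**: a linear form which is nonnegative wherever the forms `a i`, `i ∈ s`, are
all nonnegative is a nonnegative combination of these forms. -/
theorem farkas {I W : Type*} [AddCommGroup W] [Module ℝ W] (s : Finset I) :
    ∀ (a : I → W →ₗ[ℝ] ℝ) (b : W →ₗ[ℝ] ℝ),
      (∀ x, (∀ i ∈ s, 0 ≤ a i x) → 0 ≤ b x) →
      ∃ l : I → ℝ, (∀ i, 0 ≤ l i) ∧ ∀ x, b x = ∑ i ∈ s, l i * a i x := by
  classical
  induction s using Finset.induction_on with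
  | empty =>
    intro a b h
    refine ⟨0, fun _ => le_rfl, fun x => ?_⟩
    have h1 := h x (by simp)
    have h2 := h (-x) (by simp)
    rw [map_neg] at h2
    simp only [sum_empty]
    linarith
  | insert j s hj ih =>
    intro a b h
    by_cases hs : ∀ x, (∀ i ∈ s, 0 ≤ a i x) → 0 ≤ b x
    · obtain ⟨l, hl, hb⟩ := ih a b hs
      refine ⟨fun i => if i = j then 0 else l i, fun i => ?_, fun x => ?_⟩
      · dsimp only
        split_ifs
        exacts [le_rfl, hl i]
      · rw [sum_insert hj, hb x]
        simp only [if_true, zero_mul, zero_add]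
        refine sum_congr rfl fun i hi => ?_
        rw [if_neg (ne_of_mem_of_not_mem hi hj)]
    · push Not at hs
      obtain ⟨u, hu, hbu⟩ := hs
      have hju : a j u < 0 := by
        by_contra! hju
        refine absurd (h u fun i hi => ?_) (not_le.2 hbu)
        rcases mem_insert.1 hi with rfl | hi
        exacts [hju, hu i hi]
      -- Compose every form with the projection onto `ker (a j)` along `u`; this kills `a j`.
      let x' : W → W := fun x => x - (a j x / a j u) • u
      have hx' : ∀ x, a j (x' x) = 0 := by
        intro x
        simp only [x', map_sub, map_smul, smul_eq_mul]
        field_simp [hju.ne]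
        ring
      have key := ih (fun i => a i - (a i u / a j u) • a j) (b - (b u / a j u) • a j) (by
        intro x hx
        have h1 := h (x' x) (by
          intro i hi
          rcases mem_insert.1 hi with rfl | hi
          · exact (hx' x).ge
          · have := hx i hi
            simp only [x', LinearMap.sub_apply, LinearMap.smul_apply, map_sub, map_smul,
              smul_eq_mul] at this ⊢
            convert this using 2
            ring)
        simp only [x', LinearMap.sub_apply, LinearMap.smul_apply, map_sub, map_smul,
          smul_eq_mul] at h1 ⊢
        convert h1 using 2
        ring)
      obtain ⟨l, hl, hb⟩ := key
      -- The coefficient of `a j` is forced by evaluating at `u`.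
      refine ⟨fun i => if i = j then (b u - ∑ k ∈ s, l k * a k u) / a j u else l i,
        fun i => ?_, fun x => ?_⟩
      · dsimp only
        split_ifs
        · refine div_nonneg_of_nonpos ?_ hju.le
          have := sum_nonneg fun k hk => mul_nonneg (hl k) (hu k hk)
          linarith
        · exact hl i
      · have hbx := hb x
        have e1 : ∑ i ∈ s, (if i = j then (b u - ∑ k ∈ s, l k * a k u) / a j u else l i) * a i x
            = ∑ i ∈ s, l i * a i x := by
          refine sum_congr rfl fun i hi => ?_
          rw [if_neg (ne_of_mem_of_not_mem hi hj)]
        have e2 : ∑ i ∈ s, l i * (a i x - a i u / a j u * a j x)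
            = ∑ i ∈ s, l i * a i x - (∑ i ∈ s, l i * a i u) / a j u * a j x := by
          rw [sum_div, sum_mul, ← sum_sub_distrib]
          exact sum_congr rfl fun i _ => by ring
        rw [sum_insert hj, e1]
        simp only [LinearMap.sub_apply, LinearMap.smul_apply, smul_eq_mul] at hbx
        rw [e2] at hbx
        simp only [if_true]
        rw [sub_div, sub_mul]
        linarith

variable {V E : Type*} [Fintype V] [Fintype E] [DecidableEq V]

/-- The transposed incidence operator `Bᵀ`: net outflow of `f` at the vertex `w`. -/
def netOut (tail head : E → V) (f : E → ℝ) (w : V) : ℝ :=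
  (∑ e, if tail e = w then f e else 0) - ∑ e, if head e = w then f e else 0

/-- Adjointness `⟨Bᵀ f, z⟩ = ⟨f, B z⟩`. -/
theorem sum_netOut_mul (tail head : E → V) (f : E → ℝ) (z : V → ℝ) :
    ∑ w, netOut tail head f w * z w = ∑ e, f e * (z (tail e) - z (head e)) := by
  have aux : ∀ p : E → V, ∑ w, (∑ e, if p e = w then f e else 0) * z w = ∑ e, f e * z (p e) := by
    intro p
    simp only [sum_mul]
    rw [sum_comm]
    simp [ite_mul]
  simp only [netOut, sub_mul, sum_sub_distrib, aux, mul_sub]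

theorem weak_duality (tail head : E → V) (c : E → ℝ) (d : V → ℝ) (f : E → ℝ) (y : V → ℝ)
    (hf : ∀ e, 0 ≤ f e) (hfd : ∀ w, netOut tail head f w = d w)
    (hy : ∀ e, 0 ≤ c e - (y (tail e) - y (head e))) :
    ∑ v, d v * y v ≤ ∑ e, c e * f e := by
  have h := sum_netOut_mul tail head f y
  simp only [hfd] at h
  rw [h]
  refine sum_le_sum fun e _ => ?_
  nlinarith [mul_nonneg (hf e) (hy e)]

/-- The condition of Farkas' lemma for the combined primal-dual system. -/
theorem multiplier_nonneg (tail head : E → V) (c : E → ℝ) (d : V → ℝ)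
    (f : E → ℝ) (y : V → ℝ)
    (hf : ∀ e, 0 ≤ f e) (hfd : ∀ w, netOut tail head f w = d w)
    (hy : ∀ e, 0 ≤ c e - (y (tail e) - y (head e)))
    (z : V → ℝ) (g : E → ℝ) (t : ℝ) (hg : ∀ e, 0 ≤ g e) (ht : 0 ≤ t)
    (hz : ∀ e, 0 ≤ z (tail e) - z (head e) + t * c e)
    (hgd : ∀ w, netOut tail head g w = t * d w) :
    0 ≤ ∑ v, d v * z v + ∑ e, c e * g e := by
  rcases ht.eq_or_lt with rfl | ht
  · have h1 := sum_netOut_mul tail head f z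
    have h2 := sum_netOut_mul tail head g y
    simp only [hfd] at h1
    simp only [hgd, zero_mul, sum_const_zero] at h2
    rw [h1]
    have h3 : 0 ≤ ∑ e, f e * (z (tail e) - z (head e)) :=
      sum_nonneg fun e _ => mul_nonneg (hf e) (by simpa using hz e)
    have h4 : ∑ e, g e * (y (tail e) - y (head e)) ≤ ∑ e, c e * g e :=
      sum_le_sum fun e _ => by nlinarith [mul_nonneg (hg e) (hy e)]
    linarith
  · have h1 := weak_duality tail head (fun e => t * c e) (fun w => t * d w) g (-z) hg hgd
      (fun e => by have := hz e; simp only [Pi.neg_apply]; linarith)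
    simp only [Pi.neg_apply, mul_neg, sum_neg_distrib, mul_assoc, ← mul_sum] at h1
    nlinarith

/-- The combined primal-dual system with the reversed weak duality inequality is solvable. -/
theorem exists_pair (tail head : E → V) (c : E → ℝ) (d : V → ℝ)
    (f : E → ℝ) (y : V → ℝ)
    (hf : ∀ e, 0 ≤ f e) (hfd : ∀ w, netOut tail head f w = d w)
    (hy : ∀ e, 0 ≤ c e - (y (tail e) - y (head e))) :
    ∃ (f₀ : E → ℝ) (y₀ : V → ℝ), (∀ e, 0 ≤ f₀ e) ∧ (∀ w, netOut tail head f₀ w = d w) ∧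
      (∀ e, 0 ≤ c e - (y₀ (tail e) - y₀ (head e))) ∧
      ∑ e, c e * f₀ e ≤ ∑ v, d v * y₀ v := by
  classical
  -- Coordinates `z v`, `g e`, `t` on the space of multipliers.
  let P : V → ((V → ℝ) × (E → ℝ) × ℝ) →ₗ[ℝ] ℝ := fun v => LinearMap.proj v ∘ₗ LinearMap.fst ℝ _ _
  let Q : E → ((V → ℝ) × (E → ℝ) × ℝ) →ₗ[ℝ] ℝ := fun e =>
    LinearMap.proj e ∘ₗ LinearMap.fst ℝ _ _ ∘ₗ LinearMap.snd ℝ _ _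
  let T : ((V → ℝ) × (E → ℝ) × ℝ) →ₗ[ℝ] ℝ := LinearMap.snd ℝ _ _ ∘ₗ LinearMap.snd ℝ _ _
  let F : E → ((V → ℝ) × (E → ℝ) × ℝ) →ₗ[ℝ] ℝ := fun e => P (tail e) - P (head e) + c e • T
  let N : V → ((V → ℝ) × (E → ℝ) × ℝ) →ₗ[ℝ] ℝ := fun w =>
    (∑ e, (if tail e = w then (1 : ℝ) else 0) • Q e)
      - (∑ e, (if head e = w then (1 : ℝ) else 0) • Q e) - d w • T
  have hF : ∀ e z g t, F e (z, g, t) = z (tail e) - z (head e) + t * c e := by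
    intro e z g t
    simp [F, P, T, mul_comm]
  have hN : ∀ w z g t, N w (z, g, t) = netOut tail head g w - t * d w := by
    intro w z g t
    simp [-ite_smul, N, Q, T, netOut, mul_comm]
  -- The free variable `y` is split into its positive and negative part, hence `N` and `-N`.
  let a : E ⊕ V ⊕ V ⊕ E ⊕ Unit → ((V → ℝ) × (E → ℝ) × ℝ) →ₗ[ℝ] ℝ :=
    Sum.elim F (Sum.elim N (Sum.elim (fun w => -N w) (Sum.elim Q fun _ => T)))
  let b : ((V → ℝ) × (E → ℝ) × ℝ) →ₗ[ℝ] ℝ := ∑ v, d v • P v + ∑ e, c e • Q e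
  have hb : ∀ z g t, b (z, g, t) = ∑ v, d v * z v + ∑ e, c e * g e := by
    intro z g t
    simp [b, P, Q]
  obtain ⟨l, hl, h⟩ := farkas univ a b (by
    rintro ⟨z, g, t⟩ hx
    rw [hb]
    refine multiplier_nonneg tail head c d f y hf hfd hy z g t ?_ ?_ ?_ ?_
    · exact fun e => hx (.inr (.inr (.inr (.inl e)))) (mem_univ _)
    · exact hx (.inr (.inr (.inr (.inr ())))) (mem_univ _)
    · exact fun e => hF e z g t ▸ hx (.inl e) (mem_univ _)
    · intro w
      have h1 : 0 ≤ N w (z, g, t) := hx (.inr (.inl w)) (mem_univ _)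
      have h2 : 0 ≤ -N w (z, g, t) := hx (.inr (.inr (.inl w))) (mem_univ _)
      rw [hN] at h1 h2
      linarith)
  let f₀ : E → ℝ := fun e => l (.inl e)
  let y₀ : V → ℝ := fun v => l (.inr (.inl v)) - l (.inr (.inr (.inl v)))
  let s : E → ℝ := fun e => l (.inr (.inr (.inr (.inl e))))
  let r : ℝ := l (.inr (.inr (.inr (.inr ()))))
  have main : ∀ (z : V → ℝ) (g : E → ℝ) (t : ℝ), ∑ v, d v * z v + ∑ e, c e * g e =
      ∑ w, netOut tail head f₀ w * z w + t * ∑ e, c e * f₀ e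
        + (∑ e, g e * (y₀ (tail e) - y₀ (head e)) - t * ∑ v, d v * y₀ v)
        + ∑ e, s e * g e + r * t := by
    intro z g t
    rw [← hb z g t, h, sum_netOut_mul, ← sum_netOut_mul tail head g y₀]
    simp only [Fintype.sum_sum_type, a, Sum.elim_inl, Sum.elim_inr, LinearMap.neg_apply, hF, hN,
      univ_unique, sum_singleton]
    have e1 : ∑ e, l (.inl e) * (z (tail e) - z (head e) + t * c e)
        = ∑ e, f₀ e * (z (tail e) - z (head e)) + t * ∑ e, c e * f₀ e := by
      rw [mul_sum, ← sum_add_distrib]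
      exact sum_congr rfl fun e _ => by simp only [f₀]; ring
    have e2 : ∑ w, l (.inr (.inl w)) * (netOut tail head g w - t * d w)
        + ∑ w, l (.inr (.inr (.inl w))) * -(netOut tail head g w - t * d w)
        = ∑ w, netOut tail head g w * y₀ w - t * ∑ v, d v * y₀ v := by
      rw [mul_sum, ← sum_sub_distrib, ← sum_add_distrib]
      exact sum_congr rfl fun e _ => by simp only [y₀]; ring
    rw [e1, ← e2]
    simp only [Q, T, s, r, LinearMap.comp_apply, LinearMap.proj_apply, LinearMap.fst_apply,
      LinearMap.snd_apply, PUnit.default_eq_unit]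
    ring
  refine ⟨f₀, y₀, fun e => hl _, fun w => ?_, fun e => ?_, ?_⟩
  · have := main (Pi.single w 1) 0 0
    simp [Pi.single_apply] at this
    exact this.symm
  · have := main 0 (Pi.single e 1) 0
    simp [Pi.single_apply] at this
    have hs : 0 ≤ s e := hl _
    linarith
  · have := main 0 0 1
    simp at this
    have hr : 0 ≤ r := hl _
    linarith

end Transshipment

/-- **Strong duality for transshipment.**
`G = (V, E)` is a finite directed graph given by `tail head : E → V`; the incidence
matrix acts as `(B y)(e) = y (tail e) - y (head e)` and
`(Bᵀ f)(w) = ∑_{tail e = w} f e - ∑_{head e = w} f e`.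
If the primal `min {⟨c,f⟩ : Bᵀ f = d, f ≥ 0}` is feasible and the dual
`max {⟨d,y⟩ : c - B y ≥ 0}` is feasible, then both optima are attained and equal. -/
theorem transshipment_strong_duality
    {V E : Type*} [Fintype V] [Fintype E] [DecidableEq V]
    (tail head : E → V) (c : E → ℝ) (d : V → ℝ)
    (hprimal : ∃ f : E → ℝ, (∀ e, 0 ≤ f e) ∧
      ∀ w : V, ((∑ e, if tail e = w then f e else 0) - ∑ e, if head e = w then f e else 0) = d w)
    (hdual : ∃ y : V → ℝ, ∀ e : E, 0 ≤ c e - (y (tail e) - y (head e))) :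
    ∃ (f₀ : E → ℝ) (y₀ : V → ℝ),
      (∀ e, 0 ≤ f₀ e) ∧
      (∀ w : V, ((∑ e, if tail e = w then f₀ e else 0) - ∑ e, if head e = w then f₀ e else 0)
        = d w) ∧
      (∀ e : E, 0 ≤ c e - (y₀ (tail e) - y₀ (head e))) ∧
      (∀ f : E → ℝ, (∀ e, 0 ≤ f e) →
        (∀ w : V, ((∑ e, if tail e = w then f e else 0) - ∑ e, if head e = w then f e else 0)
          = d w) →
        ∑ e, c e * f₀ e ≤ ∑ e, c e * f e) ∧
      (∀ y : V → ℝ, (∀ e : E, 0 ≤ c e - (y (tail e) - y (head e))) →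
        ∑ v, d v * y v ≤ ∑ v, d v * y₀ v) ∧
      ∑ e, c e * f₀ e = ∑ v, d v * y₀ v := by
  obtain ⟨f, hf, hfd⟩ := hprimal
  obtain ⟨y, hy⟩ := hdual
  obtain ⟨f₀, y₀, hf₀, hfd₀, hy₀, hle⟩ :=
    Transshipment.exists_pair tail head c d f y hf hfd hy
  have weak := Transshipment.weak_duality tail head c d
  exact ⟨f₀, y₀, hf₀, hfd₀, hy₀, fun f' h1 h2 => hle.trans (weak f' y₀ h1 h2 hy₀),
    fun y' h1 => (weak f₀ y' hf₀ hfd₀ h1).trans hle, hle.antisymm (weak f₀ y₀ hf₀ hfd₀ hy₀)⟩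
end

section
/- Let x > 0 and δ ∈ ℝ with |δ| ≤ 0.1·x, and let α ∈ (0, 1/4]. Then (x + δ)^{−α} ≤ x^{−α} − α·x^{−1−α}·δ + α·x^{−2−α}·δ², and |(x + δ)^{−1−α} − x^{−1−α}| ≤ 2·|δ|·x^{−2−α}. -/
/-!
Both bounds are homogeneous in `x`, so put `t = δ / x` with `|t| ≤ 1/10` and work at `x = 1`.

The upper bound `(1 + t) ^ (-α) ≤ 1 - α t + α t²` comes from Bernoulli's inequality applied to
an approximate inverse square root. With `r = 1 - t/2 + t²/2` one has `1 ≤ (1 + t) r²`, hence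
`(1 + t) ^ (-α) ≤ r ^ (2α) ≤ 1 + 2α (r - 1)`, which is exactly the claimed bound. (Bernoulli
applied directly to `(1 + t)⁻¹` is too weak when `t < 0`.)

Bernoulli for `(1 + t) ^ α` also gives `1 - α t ≤ (1 + t) ^ (-α)`. Dividing these two bounds by
`1 + t` controls `(1 + t) ^ (-1 - α)` with error at most `2 |t|`.
-/

open Real

/-- The second-order upper bound at `x = 1`, with the larger coefficient `α` in place of
`α (1 + α) / 2`. -/
lemma one_add_rpow_neg_le {t α : ℝ} (h1 : -(1 / 10) ≤ t) (h2 : t ≤ 1 / 10)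
    (hα0 : 0 < α) (hα : α ≤ 1 / 4) :
    (1 + t) ^ (-α) ≤ 1 - α * t + α * t ^ 2 := by
  have ht : 0 < 1 + t := by linarith
  have hr : 0 < 1 + (-t / 2 + t ^ 2 / 2) := by nlinarith
  have key : (1 + t)⁻¹ ≤ (1 + (-t / 2 + t ^ 2 / 2)) ^ (2 : ℝ) := by
    rw [Real.rpow_two, inv_le_iff_one_le_mul₀ ht]
    -- The product exceeds `1` by `t²` times a polynomial with constant term `1/4`,
    -- nonnegative on the given range.
    have hq : 0 ≤ 1 / 4 + 3 / 4 * t - t ^ 2 / 4 + t ^ 3 / 4 := by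
      nlinarith [sq_nonneg t, mul_nonneg (sq_nonneg t) (sub_nonneg.2 h1)]
    nlinarith [mul_nonneg (sq_nonneg t) hq]
  calc (1 + t) ^ (-α) = ((1 + t)⁻¹) ^ α := by
        rw [Real.rpow_neg ht.le, Real.inv_rpow ht.le]
    _ ≤ ((1 + (-t / 2 + t ^ 2 / 2)) ^ (2 : ℝ)) ^ α :=
        Real.rpow_le_rpow (inv_nonneg.2 ht.le) key hα0.le
    _ = (1 + (-t / 2 + t ^ 2 / 2)) ^ (2 * α) := (Real.rpow_mul hr.le _ _).symm
    _ ≤ 1 + 2 * α * (-t / 2 + t ^ 2 / 2) :=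
        rpow_one_add_le_one_add_mul_self (by linarith) (by linarith) (by linarith)
    _ = 1 - α * t + α * t ^ 2 := by ring

/-- The tangent-line lower bound at `x = 1`. -/
lemma le_one_add_rpow_neg {t α : ℝ} (h1 : -(1 / 10) ≤ t)
    (hα0 : 0 < α) (hα : α ≤ 1 / 4) :
    1 - α * t ≤ (1 + t) ^ (-α) := by
  have ht : 0 < 1 + t := by linarith
  have hB : (1 + t) ^ α ≤ 1 + α * t :=
    rpow_one_add_le_one_add_mul_self (by linarith) hα0.le (by linarith)
  have hpos : 0 < (1 + t) ^ α := Real.rpow_pos_of_pos ht _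
  rw [Real.rpow_neg ht.le]
  refine le_trans ?_ (inv_anti₀ hpos hB)
  rw [← one_div, le_div_iff₀ (hpos.trans_le hB)]
  nlinarith [sq_nonneg (α * t)]

lemma abs_one_add_rpow_sub_one_le {t α : ℝ} (h1 : -(1 / 10) ≤ t) (h2 : t ≤ 1 / 10)
    (hα0 : 0 < α) (hα : α ≤ 1 / 4) :
    |(1 + t) ^ (-1 - α) - 1| ≤ 2 * |t| := by
  have ht : 0 < 1 + t := by linarith
  have hU := one_add_rpow_neg_le h1 h2 hα0 hα
  have hL := le_one_add_rpow_neg h1 hα0 hα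
  have hA : (1 + t) ^ (-1 - α) = (1 + t) ^ (-α) / (1 + t) := by
    rw [← Real.rpow_sub_one ht.ne']
    congr 1
    ring
  rw [hA, abs_le, neg_le_sub_iff_le_add, sub_le_iff_le_add, ← sub_le_iff_le_add,
    le_div_iff₀ ht, div_le_iff₀ ht]
  rcases abs_cases t with ⟨h, h0⟩ | ⟨h, h0⟩ <;> rw [h] <;> constructor <;>
    nlinarith [mul_nonneg hα0.le (sq_nonneg t)]

/-- **Taylor expansion bounds for real powers.**
For `x > 0`, `|δ| ≤ 0.1·x` and `α ∈ (0, 1/4]`: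
`(x+δ)^{-α} ≤ x^{-α} - α x^{-1-α} δ + α x^{-2-α} δ²` and
`|(x+δ)^{-1-α} - x^{-1-α}| ≤ 2 |δ| x^{-2-α}` (real powers of positive reals). -/
theorem taylor_expansion_rpow (x δ α : ℝ) (hx : 0 < x) (hδ : |δ| ≤ 0.1 * x)
    (hα0 : 0 < α) (hα : α ≤ 1 / 4) :
    (x + δ) ^ (-α) ≤ x ^ (-α) - α * x ^ (-1 - α) * δ + α * x ^ (-2 - α) * δ ^ 2 ∧
    |(x + δ) ^ (-1 - α) - x ^ (-1 - α)| ≤ 2 * |δ| * x ^ (-2 - α) := by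
  obtain ⟨t, rfl⟩ : ∃ t, δ = x * t := ⟨δ / x, by field_simp⟩
  have habs : |t| ≤ 1 / 10 := by
    rw [abs_mul, abs_of_pos hx] at hδ
    nlinarith
  obtain ⟨h1, h2⟩ := abs_le.1 habs
  have ht : 0 ≤ 1 + t := by linarith
  have e1 : x ^ (-1 - α) * x = x ^ (-α) := by
    rw [← Real.rpow_add_one hx.ne']
    congr 1
    ring
  have e2 : x ^ (-2 - α) * x = x ^ (-1 - α) := by
    rw [← Real.rpow_add_one hx.ne']
    congr 1
    ring
  have hsum : x + x * t = x * (1 + t) := by ring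
  rw [hsum, Real.mul_rpow hx.le ht, Real.mul_rpow hx.le ht]
  constructor
  · calc x ^ (-α) * (1 + t) ^ (-α)
        ≤ x ^ (-α) * (1 - α * t + α * t ^ 2) :=
          mul_le_mul_of_nonneg_left (one_add_rpow_neg_le h1 h2 hα0 hα) (Real.rpow_nonneg hx.le _)
      _ = x ^ (-α) - α * x ^ (-1 - α) * (x * t) + α * x ^ (-2 - α) * (x * t) ^ 2 := by
          rw [← e1, ← e2]
          ring
  · have hp : 0 ≤ x ^ (-1 - α) := Real.rpow_nonneg hx.le _
    calc |x ^ (-1 - α) * (1 + t) ^ (-1 - α) - x ^ (-1 - α)|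
        = x ^ (-1 - α) * |(1 + t) ^ (-1 - α) - 1| := by
          rw [← mul_sub_one, abs_mul, abs_of_nonneg hp]
      _ ≤ x ^ (-1 - α) * (2 * |t|) :=
          mul_le_mul_of_nonneg_left (abs_one_add_rpow_sub_one_le h1 h2 hα0 hα) hp
      _ = 2 * |x * t| * x ^ (-2 - α) := by
          rw [← e2, abs_mul, abs_of_pos hx]
          ring
end

section
/- Let G=(V,E) be a finite directed graph with m = |E| ≥ 2 edges, C ≥ 2, α = 1/(1000·log(mC)), κ ≥ 1, costs c ∈ ℝ^E, demand d ∈ ℝ^V, and threshold F ∈ ℝ. Let y ∈ ℝ^V satisfy ⟨d, y⟩ < F and 0 < c(e) − (By)(e) ≤ 3·m·C for every edge e. Let g = g(y) and U = diag(u(y)). Suppose Δ ∈ ℝ^V satisfies ⟨g, Δ⟩ ≤ −(1/κ)·‖UBΔ‖₁ and ⟨g, Δ⟩ = −1/(100·κ²). Then y + Δ is feasible, i.e., c − B(y+Δ) > 0 entrywise and ⟨d, y+Δ⟩ < F, and moreover Φ(y + Δ) ≤ Φ(y) − 1/(1000·κ²). -/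
/-!
Write `t e = (BΔ)(e) / s(e)` for the relative change of the slack of the edge `e`. Since
`s(e) ≤ 3mC` and `α` is of order `1 / log (mC)`, every weight `s(e)^{-α}` is at least `1/2`
(`half_le_rpow_neg`), so the two hypotheses on `Δ` give `∑ s(e)^{-α} |t e| ≤ 1/(100κ)` and hence
`|t e| ≤ 1/(50κ)` for every edge: no slack can vanish. Pairing the gradient with `Δ`
(`dualGrad_pairing`) expresses `100 m ⟨d,Δ⟩ / r` through `⟨g,Δ⟩` and `∑ s(e)^{-α} t e`, which
shows `⟨d,Δ⟩ < r`.

For the decrease, `log (1 - x) ≤ -x` bounds the logarithmic term by its linearization, and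
Bernoulli's inequality gives `(1 - t)^{-α} ≤ 1 + αt + 2αt²` (`rpow_neg_one_sub_le`). The first-order
terms add up to `⟨g,Δ⟩ = -1/(100κ²)`, while the second-order error is at most
`2α · max |t e| · ∑ s(e)^{-α} |t e|`, which is negligible because `α ≤ 1/1000`.
-/

open Finset Real

noncomputable section

variable {V E : Type*} [Fintype V] [Fintype E] [DecidableEq V]

/-- The slack `s(y)(e) = c e - (B y)(e)` where `(B y)(e) = y (tail e) - y (head e)`. -/
def dualSlack (tail head : E → V) (c : E → ℝ) (y : V → ℝ) (e : E) : ℝ :=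
  c e - (y (tail e) - y (head e))

/-- The edge capacity `u(y)(e) = s(y)(e)^{-1-α}`. -/
def dualCap (tail head : E → V) (c : E → ℝ) (α : ℝ) (y : V → ℝ) (e : E) : ℝ :=
  dualSlack tail head c y e ^ (-1 - α)

/-- The vertex gradient `g(y) = (-100 m / (F - ⟨d,y⟩)) d + α Bᵀ s(y)^{-1-α}`,
where `(Bᵀ x)(v) = ∑_{tail e = v} x e - ∑_{head e = v} x e`. -/
def dualGrad (tail head : E → V) (c : E → ℝ) (d : V → ℝ) (F α : ℝ) (y : V → ℝ) (v : V) : ℝ :=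
  (-100 * (Fintype.card E : ℝ) / (F - ∑ w, d w * y w)) * d v
    + α * ((∑ e, if tail e = v then dualCap tail head c α y e else 0)
         - (∑ e, if head e = v then dualCap tail head c α y e else 0))

/-- The potential `Φ(y) = 100 m log (F - ⟨d,y⟩) + ∑_e s(y)(e)^{-α}`. -/
def dualPhi (tail head : E → V) (c : E → ℝ) (d : V → ℝ) (F α : ℝ) (y : V → ℝ) : ℝ :=
  100 * (Fintype.card E : ℝ) * Real.log (F - ∑ w, d w * y w)
    + ∑ e, dualSlack tail head c y e ^ (-α)

/-- The directional derivative of the potential: moving `Bᵀ` across the pairing turns the sum over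
vertices into a sum over edges. -/
lemma dualGrad_pairing (tail head : E → V) (c : E → ℝ) (d : V → ℝ) (F α : ℝ) (y Δ : V → ℝ) :
    ∑ v, dualGrad tail head c d F α y v * Δ v
      = (-100 * (Fintype.card E : ℝ) / (F - ∑ w, d w * y w)) * ∑ v, d v * Δ v
        + α * ∑ e, dualCap tail head c α y e * (Δ (tail e) - Δ (head e)) := by
  have incidence : ∀ f : E → V,
      ∑ v, (∑ e, if f e = v then dualCap tail head c α y e else 0) * Δ v
        = ∑ e, dualCap tail head c α y e * Δ (f e) := by
    intro f
    simp_rw [Finset.sum_mul, ite_mul, zero_mul]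
    rw [Finset.sum_comm]
    simp
  simp_rw [mul_sub, Finset.sum_sub_distrib]
  rw [← incidence tail, ← incidence head]
  rw [← Finset.sum_sub_distrib, Finset.mul_sum, Finset.mul_sum, ← Finset.sum_add_distrib]
  refine Finset.sum_congr rfl fun v _ => ?_
  unfold dualGrad
  ring

/-- Bernoulli's inequality applied to `(1 - t)⁻¹ = 1 + t / (1 - t)`: a second-order upper bound for
`(1 - t)^{-α}`. -/
lemma rpow_neg_one_sub_le {α t : ℝ} (h0 : 0 ≤ α) (h1 : α ≤ 1) (ht : |t| ≤ 1 / 2) :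
    (1 - t) ^ (-α) ≤ 1 + α * t + 2 * α * t ^ 2 := by
  obtain ⟨hl, hu⟩ := abs_le.1 ht
  have hpos : 0 < 1 - t := by linarith
  have hinv : (1 - t)⁻¹ = 1 + t / (1 - t) := by field_simp; ring
  have hB : (1 + t / (1 - t)) ^ α ≤ 1 + α * (t / (1 - t)) := by
    refine rpow_one_add_le_one_add_mul_self ?_ h0 h1
    rw [le_div_iff₀ hpos]; linarith
  rw [Real.rpow_neg hpos.le, ← Real.inv_rpow hpos.le, hinv]
  have hq : t / (1 - t) ≤ t + 2 * t ^ 2 := by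
    rw [div_le_iff₀ hpos]
    nlinarith [mul_nonneg (sq_nonneg t) (by linarith : (0 : ℝ) ≤ 1 - 2 * t)]
  nlinarith [mul_le_mul_of_nonneg_left hq h0]

lemma one_le_log_of_four_le {x : ℝ} (hx : 4 ≤ x) : 1 ≤ Real.log x := by
  rw [Real.le_log_iff_exp_le (by linarith)]
  linarith [Real.exp_one_lt_d9]

/-- The exponent `α` is so small that `s^α ≤ 2` throughout the range `0 < s ≤ 3x`, where `x`
stands for `mC`. -/
lemma half_le_rpow_neg {x s : ℝ} (hx : 4 ≤ x) (hs0 : 0 < s) (hs : s ≤ 3 * x) :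
    1 / 2 ≤ s ^ (-(1 / (1000 * Real.log x))) := by
  have hL := one_le_log_of_four_le hx
  have hlog : Real.log s ≤ 2 * Real.log x := by
    -- `3x ≤ x²` because `x ≥ 4`
    have : Real.log s ≤ Real.log (x * x) := Real.log_le_log hs0 (by nlinarith)
    rw [Real.log_mul (by linarith) (by linarith)] at this
    linarith
  rw [Real.rpow_def_of_pos hs0]
  have hq : Real.log s * (1 / (1000 * Real.log x)) ≤ 1 / 2 := by
    rw [mul_one_div, div_le_iff₀ (by linarith)]
    linarith
  linarith [Real.add_one_le_exp (Real.log s * -(1 / (1000 * Real.log x)))]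

/-- **Progress from cuts of small ratio.**
With `m = |E| ≥ 2`, `C ≥ 2`, `α = 1/(1000 log (m C))`, `κ ≥ 1`, a feasible `y`
(`⟨d,y⟩ < F` and slacks in `(0, 3 m C]`), and `Δ` satisfying
`⟨g(y), Δ⟩ ≤ -(1/κ)·‖U(y) B Δ‖₁` and `⟨g(y), Δ⟩ = -1/(100 κ²)`, the point `y + Δ`
remains feasible and `Φ(y + Δ) ≤ Φ(y) - 1/(1000 κ²)`. -/
theorem progress_from_small_ratio_cut
    (tail head : E → V) (c : E → ℝ) (d : V → ℝ) (F C κ : ℝ)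
    (hm : 2 ≤ Fintype.card E) (hC : 2 ≤ C) (hκ : 1 ≤ κ)
    (α : ℝ) (hα : α = 1 / (1000 * Real.log ((Fintype.card E : ℝ) * C)))
    (y : V → ℝ)
    (hr : ∑ v, d v * y v < F)
    (hs : ∀ e, 0 < dualSlack tail head c y e ∧
      dualSlack tail head c y e ≤ 3 * (Fintype.card E : ℝ) * C)
    (Δ : V → ℝ)
    (hΔ1 : ∑ v, dualGrad tail head c d F α y v * Δ v
      ≤ -(1 / κ) * ∑ e, dualCap tail head c α y e * |Δ (tail e) - Δ (head e)|)
    (hΔ2 : ∑ v, dualGrad tail head c d F α y v * Δ v = -1 / (100 * κ ^ 2)) :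
    (∀ e, 0 < dualSlack tail head c (fun v => y v + Δ v) e) ∧
    (∑ v, d v * (y v + Δ v) < F) ∧
    dualPhi tail head c d F α (fun v => y v + Δ v)
      ≤ dualPhi tail head c d F α y - 1 / (1000 * κ ^ 2) := by
  obtain ⟨m, hmdef⟩ : ∃ m : ℝ, m = (Fintype.card E : ℝ) := ⟨_, rfl⟩
  have hm2 : (2 : ℝ) ≤ m := by rw [hmdef]; exact_mod_cast hm
  rw [← hmdef] at hα hs
  have hx : 4 ≤ m * C := by nlinarith
  have hL := one_le_log_of_four_le hx
  have hα0 : 0 < α := by rw [hα]; positivity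
  have hα1 : α ≤ 1 / 1000 := by
    rw [hα]
    exact one_div_le_one_div_of_le (by norm_num) (by linarith)
  have hκ0 : 0 < κ := by linarith
  set S : E → ℝ := dualSlack tail head c y with hS
  have hS0 : ∀ e, 0 < S e := fun e => (hs e).1
  set w : E → ℝ := fun e => S e ^ (-α) with hw
  set t : E → ℝ := fun e => (Δ (tail e) - Δ (head e)) / S e with ht
  have hw_half : ∀ e, 1 / 2 ≤ w e := fun e => by
    have := half_le_rpow_neg hx (hS0 e) (by linarith [(hs e).2])
    rwa [← hα] at this
  have hw0 : ∀ e, 0 < w e := fun e => by linarith [hw_half e]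
  have hcap : ∀ e, dualCap tail head c α y e = w e / S e := fun e => by
    change S e ^ (-1 - α) = S e ^ (-α) / S e
    rw [show -1 - α = -α - 1 by ring, Real.rpow_sub_one (hS0 e).ne']
  have hcap_t : ∀ e, dualCap tail head c α y e * (Δ (tail e) - Δ (head e)) = w e * t e :=
    fun e => by rw [hcap]; simp only [ht]; ring
  have hcap_abs : ∀ e, dualCap tail head c α y e * |Δ (tail e) - Δ (head e)| = w e * |t e| :=
    fun e => by
      rw [hcap]; simp only [ht]; rw [abs_div, abs_of_pos (hS0 e)]; ring
  set A : ℝ := ∑ e, w e * |t e| with hA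
  have hA_le : κ * A ≤ 1 / 100 := by
    rw [hΔ2] at hΔ1
    simp_rw [hcap_abs] at hΔ1
    have h := mul_le_mul_of_nonneg_left hΔ1 (sq_nonneg κ)
    have e1 : κ ^ 2 * (-1 / (100 * κ ^ 2)) = -1 / 100 := by field_simp
    have e2 : κ ^ 2 * (-(1 / κ) * A) = -(κ * A) := by field_simp
    rw [e1, e2] at h
    linarith
  have hwt : ∀ e, w e * |t e| ≤ A := fun e =>
    Finset.single_le_sum (f := fun e => w e * |t e|)
      (fun e _ => mul_nonneg (hw0 e).le (abs_nonneg _)) (Finset.mem_univ e)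
  have ht_abs : ∀ e, |t e| ≤ 2 * A := fun e => by
    nlinarith [hwt e, hw_half e, abs_nonneg (t e)]
  have hA0 : 0 ≤ A := Finset.sum_nonneg fun e _ => mul_nonneg (hw0 e).le (abs_nonneg _)
  have hA1 : A ≤ 1 / 100 := by nlinarith
  have ht_half : ∀ e, |t e| ≤ 1 / 2 := fun e => by linarith [ht_abs e]
  have ht_pos : ∀ e, 0 < 1 - t e := fun e => by linarith [le_abs_self (t e), ht_half e]
  have hslack : ∀ e, dualSlack tail head c (fun v => y v + Δ v) e = S e * (1 - t e) := fun e => by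
    have h : S e * t e = Δ (tail e) - Δ (head e) := mul_div_cancel₀ _ (hS0 e).ne'
    rw [mul_sub, h, mul_one]
    simp only [hS, dualSlack]
    ring
  set r : ℝ := F - ∑ v, d v * y v with hrdef
  have hr0 : 0 < r := sub_pos.2 hr
  set ρ : ℝ := (∑ v, d v * Δ v) / r with hρ
  set T : ℝ := ∑ e, w e * t e with hT
  have hgrad : -(100 * m * ρ) + α * T = -1 / (100 * κ ^ 2) := by
    rw [← hΔ2, dualGrad_pairing, ← hmdef]
    simp_rw [hcap_t]
    rw [← hrdef, hρ]
    ring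
  have hT_abs : |T| ≤ A := by
    refine (Finset.abs_sum_le_sum_abs _ _).trans_eq (Finset.sum_congr rfl fun e _ => ?_)
    rw [abs_mul, abs_of_pos (hw0 e)]
  have hκ2 : 1 / κ ^ 2 ≤ 1 := by
    rw [div_le_one (by positivity)]; nlinarith
  have hsplit : -1 / (100 * κ ^ 2) = -(1 / κ ^ 2) / 100 := by field_simp
  have hρ1 : ρ < 1 := by
    rw [hsplit] at hgrad
    have hαT : α * T ≤ 1 := by nlinarith [le_abs_self T]
    nlinarith
  have hdsum : ∑ v, d v * (y v + Δ v) = ∑ v, d v * y v + ∑ v, d v * Δ v := by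
    simp_rw [mul_add, Finset.sum_add_distrib]
  have hres : F - ∑ v, d v * (y v + Δ v) = r * (1 - ρ) := by
    have h : r * ρ = ∑ v, d v * Δ v := mul_div_cancel₀ _ hr0.ne'
    rw [hdsum, mul_sub, h, hrdef]
    ring
  refine ⟨fun e => ?_, ?_, ?_⟩
  · rw [hslack]; exact mul_pos (hS0 e) (ht_pos e)
  · have h := mul_pos hr0 (sub_pos.2 hρ1)
    rw [← hres] at h
    linarith
  have hlog : Real.log (F - ∑ v, d v * (y v + Δ v)) ≤ Real.log r - ρ := by
    rw [hres, Real.log_mul hr0.ne' (sub_pos.2 hρ1).ne']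
    linarith [Real.log_le_sub_one_of_pos (sub_pos.2 hρ1)]
  have hedge : ∀ e, dualSlack tail head c (fun v => y v + Δ v) e ^ (-α)
      ≤ w e + α * (w e * t e) + 4 * α * A * (w e * |t e|) := fun e => by
    rw [hslack, Real.mul_rpow (hS0 e).le (ht_pos e).le]
    have hB := mul_le_mul_of_nonneg_left
      (rpow_neg_one_sub_le hα0.le (by linarith) (ht_half e)) (hw0 e).le
    -- one factor of `t² = |t| · |t|` is absorbed by the uniform bound `|t| ≤ 2A`
    have hsq : w e * t e ^ 2 ≤ 2 * A * (w e * |t e|) := by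
      rw [← sq_abs, sq]
      nlinarith [mul_le_mul_of_nonneg_left (ht_abs e) (mul_nonneg (hw0 e).le (abs_nonneg (t e)))]
    have hsq2 := mul_le_mul_of_nonneg_left hsq hα0.le
    change w e * _ ≤ _
    linarith
  have hsum : ∑ e, dualSlack tail head c (fun v => y v + Δ v) e ^ (-α)
      ≤ ∑ e, w e + α * T + 4 * α * A * A := by
    refine (Finset.sum_le_sum fun e _ => hedge e).trans_eq ?_
    rw [Finset.sum_add_distrib, Finset.sum_add_distrib, ← Finset.mul_sum, ← Finset.mul_sum]
  have hAA : A * A ≤ 1 / κ ^ 2 / 10000 := by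
    have h : A ≤ 1 / 100 / κ := by
      rw [le_div_iff₀ hκ0]; linarith
    calc A * A ≤ (1 / 100 / κ) * (1 / 100 / κ) := mul_self_le_mul_self hA0 h
      _ = 1 / κ ^ 2 / 10000 := by field_simp; norm_num
  have herr : 4 * α * A * A ≤ 1 / κ ^ 2 / 10000 := by
    nlinarith [mul_nonneg hA0 hA0]
  have hgoal : 1 / (1000 * κ ^ 2) = 1 / κ ^ 2 / 1000 := by field_simp
  have hκpos : 0 < 1 / κ ^ 2 := by positivity
  have hlogm := mul_le_mul_of_nonneg_left hlog (by linarith : (0 : ℝ) ≤ 100 * m)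
  rw [hsplit] at hgrad
  simp only [dualPhi]
  rw [← hmdef, ← hrdef, hgoal]
  change _ ≤ 100 * m * Real.log r + ∑ e, w e - _
  linarith

end
end

section
/- Let G=(V,E) be a finite directed graph with m = |E| ≥ 2 edges, C ≥ 2, α = 1/(1000·log(mC)), costs c ∈ ℝ^E, demand d ∈ ℝ^V, and threshold F ∈ ℝ. Let y ∈ ℝ^V satisfy c − By > 0 entrywise, Φ(y) ≤ 1000·m·log(mC), and log(F − ⟨d, y⟩) ≥ −10·log(mC). Suppose there exists y* ∈ ℝ^V with ⟨d, y*⟩ ≥ F and c − By* ≥ 0 entrywise. Then ⟨g(y), y* − y⟩ ≤ −50·m − α·‖U(y)·B(y* − y)‖₁, where U(y) = diag(u(y)); in particular, whenever ‖U(y)·B(y* − y)‖₁ > 0, one has ⟨g(y), y* − y⟩/‖U(y)·B(y* − y)‖₁ ≤ −α. -/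
/-!
Write `s = s(y)`, `r = F - ⟨d, y⟩`, `b = B (y* - y)` and `L = log (m C)`, so that
`⟨g(y), y* - y⟩ = -(100 m / r) ⟨d, y* - y⟩ + α ∑ u b` (`sum_dualGrad_mul`). Since `⟨d, y*⟩ ≥ F`,
`⟨d, y* - y⟩ ≥ r` and the first term is at most `-100 m`. Feasibility of `y*` gives `b ≤ s`, hence
`u (b + |b|) ≤ 2 u s = 2 s^{-α}` on each edge (`dualCap_mul_add_abs_le`). The potential bound and
the lower bound on `log r` give `∑ s^{-α} ≤ 2000 m L = 2 m / α` (`sum_slack_rpow_le`), so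
`α ∑ u (b + |b|) ≤ 4 m`. Altogether `⟨g(y), y* - y⟩ ≤ -96 m - α ∑ u |b|`.
-/

open Finset Real

noncomputable section

variable {V E : Type*} [Fintype V] [Fintype E] [DecidableEq V]

/-- Transposition of the incidence matrix: pairing `g(y)` with `x` gives
`(-100 m / r) ⟨d, x⟩ + α ⟨u(y), B x⟩`. -/
lemma sum_dualGrad_mul (tail head : E → V) (c : E → ℝ) (d : V → ℝ) (F α : ℝ) (y x : V → ℝ) :
    ∑ v, dualGrad tail head c d F α y v * x v
      = (-100 * (Fintype.card E : ℝ) / (F - ∑ w, d w * y w)) * ∑ v, d v * x v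
        + α * ∑ e, dualCap tail head c α y e * (x (tail e) - x (head e)) := by
  have key : ∀ f : E → V, ∑ v, (∑ e, if f e = v then dualCap tail head c α y e else 0) * x v
      = ∑ e, dualCap tail head c α y e * x (f e) := by
    intro f
    simp_rw [Finset.sum_mul]
    rw [Finset.sum_comm]
    refine Finset.sum_congr rfl fun e _ => ?_
    simp [ite_mul]
  simp_rw [dualGrad, add_mul, mul_assoc, sub_mul, Finset.sum_add_distrib, ← Finset.mul_sum,
    Finset.sum_sub_distrib, key, mul_sub, Finset.sum_sub_distrib]
  ring

/-- The bounds on `Φ(y)` and on the residual force `∑ s(y)^{-α} ≤ 2000 m log (m C)`. -/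
lemma sum_slack_rpow_le (tail head : E → V) (c : E → ℝ) (d : V → ℝ) (F α L : ℝ) (y : V → ℝ)
    (hΦ : dualPhi tail head c d F α y ≤ 1000 * (Fintype.card E : ℝ) * L)
    (hlog : -10 * L ≤ Real.log (F - ∑ v, d v * y v)) :
    ∑ e, dualSlack tail head c y e ^ (-α) ≤ 2000 * (Fintype.card E : ℝ) * L := by
  have h := mul_le_mul_of_nonneg_left hlog
    (by positivity : (0 : ℝ) ≤ 100 * (Fintype.card E : ℝ))
  unfold dualPhi at hΦ
  linarith

/-- With `b = (B (y* - y))(e) = s(y)(e) - s(y*)(e) ≤ s(y)(e)`, one has `b + |b| ≤ 2 s(y)(e)`;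
multiplying by the capacity turns the slack into `s(y)(e)^{-α}`. -/
lemma dualCap_mul_add_abs_le (tail head : E → V) (c : E → ℝ) (α : ℝ) (y ystar : V → ℝ) (e : E)
    (hy : 0 < dualSlack tail head c y e) (hs : 0 ≤ dualSlack tail head c ystar e) :
    dualCap tail head c α y e * ((ystar (tail e) - y (tail e)) - (ystar (head e) - y (head e)))
      + dualCap tail head c α y e *
        |(ystar (tail e) - y (tail e)) - (ystar (head e) - y (head e))|
      ≤ 2 * dualSlack tail head c y e ^ (-α) := by
  have hu : 0 ≤ dualCap tail head c α y e := Real.rpow_nonneg hy.le _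
  have hus : dualCap tail head c α y e * dualSlack tail head c y e
      = dualSlack tail head c y e ^ (-α) := by
    rw [dualCap, ← Real.rpow_add_one hy.ne']
    congr 1
    ring
  rw [← hus, ← mul_add, mul_left_comm]
  refine mul_le_mul_of_nonneg_left ?_ hu
  have hb : (ystar (tail e) - y (tail e)) - (ystar (head e) - y (head e))
      ≤ dualSlack tail head c y e := by
    unfold dualSlack at hs ⊢
    linarith
  rcases abs_cases ((ystar (tail e) - y (tail e)) - (ystar (head e) - y (head e))) with h | h <;>
    linarith

/-- **Existence of cuts with small ratio.**
With `m = |E| ≥ 2`, `C ≥ 2`, `α = 1/(1000 log (m C))`, a feasible `y` with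
`Φ(y) ≤ 1000 m log (m C)` and `log (F - ⟨d,y⟩) ≥ -10 log (m C)`, and a dual
`y*` with `⟨d, y*⟩ ≥ F` and `c - B y* ≥ 0`, one has
`⟨g(y), y* - y⟩ ≤ -50 m - α ‖U(y) B (y* - y)‖₁`; in particular, whenever
`‖U(y) B (y* - y)‖₁ > 0`, the ratio is at most `-α`. -/
theorem existence_of_small_ratio_cut
    (tail head : E → V) (c : E → ℝ) (d : V → ℝ) (F C : ℝ)
    (hm : 2 ≤ Fintype.card E) (hC : 2 ≤ C)
    (α : ℝ) (hα : α = 1 / (1000 * Real.log ((Fintype.card E : ℝ) * C)))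
    (y : V → ℝ)
    (hfeas : ∀ e, 0 < dualSlack tail head c y e)
    (hr : ∑ v, d v * y v < F)
    (hΦ : dualPhi tail head c d F α y
      ≤ 1000 * (Fintype.card E : ℝ) * Real.log ((Fintype.card E : ℝ) * C))
    (hlog : -10 * Real.log ((Fintype.card E : ℝ) * C) ≤ Real.log (F - ∑ v, d v * y v))
    (ystar : V → ℝ) (hystar1 : F ≤ ∑ v, d v * ystar v)
    (hystar2 : ∀ e, 0 ≤ dualSlack tail head c ystar e) :
    (∑ v, dualGrad tail head c d F α y v * (ystar v - y v)
      ≤ -50 * (Fintype.card E : ℝ)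
        - α * ∑ e, dualCap tail head c α y e *
            |(ystar (tail e) - y (tail e)) - (ystar (head e) - y (head e))|) ∧
    (0 < ∑ e, dualCap tail head c α y e *
        |(ystar (tail e) - y (tail e)) - (ystar (head e) - y (head e))| →
      (∑ v, dualGrad tail head c d F α y v * (ystar v - y v)) /
        (∑ e, dualCap tail head c α y e *
          |(ystar (tail e) - y (tail e)) - (ystar (head e) - y (head e))|)
        ≤ -α) := by
  have hm' : (2 : ℝ) ≤ Fintype.card E := by exact_mod_cast hm
  have hL : 0 < Real.log ((Fintype.card E : ℝ) * C) := Real.log_pos (by nlinarith)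
  have hα0 : 0 < α := by rw [hα]; positivity
  have hαL : α * Real.log ((Fintype.card E : ℝ) * C) = 1 / 1000 := by
    rw [hα]; field_simp
  have hr' : 0 < F - ∑ v, d v * y v := sub_pos.mpr hr
  have main : ∑ v, dualGrad tail head c d F α y v * (ystar v - y v)
      ≤ -50 * (Fintype.card E : ℝ)
        - α * ∑ e, dualCap tail head c α y e *
            |(ystar (tail e) - y (tail e)) - (ystar (head e) - y (head e))| := by
    rw [sum_dualGrad_mul tail head c d F α y (fun v => ystar v - y v)]
    have h1 : (-100 * (Fintype.card E : ℝ) / (F - ∑ w, d w * y w))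
        * ∑ v, d v * (ystar v - y v) ≤ -100 * (Fintype.card E : ℝ) := by
      have hd : F - ∑ w, d w * y w ≤ ∑ v, d v * (ystar v - y v) := by
        simp_rw [mul_sub, Finset.sum_sub_distrib]
        linarith
      rw [div_mul_eq_mul_div, div_le_iff₀ hr']
      nlinarith
    have h2 := Finset.sum_le_sum fun e (_ : e ∈ (Finset.univ : Finset E)) =>
      dualCap_mul_add_abs_le tail head c α y ystar e (hfeas e) (hystar2 e)
    rw [Finset.sum_add_distrib, ← Finset.mul_sum] at h2
    have h3 := sum_slack_rpow_le tail head c d F α _ y hΦ hlog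
    have h4 := mul_le_mul_of_nonneg_left
      (h2.trans (mul_le_mul_of_nonneg_left h3 zero_le_two)) hα0.le
    have h5 : α * (2 * (2000 * (Fintype.card E : ℝ) * Real.log ((Fintype.card E : ℝ) * C)))
        = 4 * (Fintype.card E : ℝ) := by
      linear_combination 4000 * (Fintype.card E : ℝ) * hαL
    rw [h5, mul_add] at h4
    linarith
  refine ⟨main, fun hpos => ?_⟩
  rw [div_le_iff₀ hpos]
  linarith

end
end

section
/- Let G=(V,E) be a finite directed graph with m = |E| edges, costs c ∈ ℝ^E, demand d ∈ ℝ^V, threshold F ∈ ℝ, κ ≥ 1, and α ∈ (0, 1/10]. Let y ∈ ℝ^V be feasible with slacks s = c − By > 0 entrywise and residual r = F − ⟨d, y⟩ > 0. Let s̃ ∈ ℝ^E_{>0} and r̃ > 0 satisfy (1 + 1/(10κ))^{−1} ≤ s̃(e)/s(e) ≤ 1 + 1/(10κ) for every edge e, and (1 + 1/(10κ))^{−1} ≤ r̃/r ≤ 1 + 1/(10κ). Let g̃ := (−100m/r̃)·d + α·Bᵀ s̃^{−1−α} and Ũ := diag(s̃^{−1−α}). If Δ ∈ ℝ^V satisfies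 ‖ŨBΔ‖₁ > 0 and ⟨g̃, Δ⟩/‖ŨBΔ‖₁ ≤ −1/κ, then ⟨g(y), Δ⟩/‖U(y)·BΔ‖₁ ≤ −1/(100·κ), where g(y) := (−100m/r)·d + α·Bᵀ s^{−1−α} and U(y) := diag(s^{−1−α}). -/
/-!
Write `w = s^{-1-α}`, `w̃ = s̃^{-1-α}`, `x = B Δ`, `ρ = r̃ / r` and `ε = 1 / (10κ)`. Pairing the
gradient with `Δ` gives `⟨g(s, r), Δ⟩ = -(100 m / r) ⟨d, Δ⟩ + α ∑ w x` (`sum_gradOf_mul`), so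
the unknown term `⟨d, Δ⟩` cancels in

  `⟨g, Δ⟩ = ρ ⟨g̃, Δ⟩ + α ∑ (w - ρ w̃) x`.

The first summand is at most `-ρ ‖Ũ B Δ‖₁ / κ`. Since `w / w̃ = (s̃ / s)^{1+α}` and `ρ` are both
`1 + O(ε)` (`rpow_ratio_bounds`), the second is at most `4 ε α ‖Ũ B Δ‖₁ ≤ 0.04 ‖Ũ B Δ‖₁ / κ`, too
small to matter. Finally `‖U B Δ‖₁` and `‖Ũ B Δ‖₁` agree up to a constant factor.
-/

open Finset Real

noncomputable section

variable {V E : Type*} [Fintype V] [Fintype E] [DecidableEq V]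

/-- The vertex gradient `g(s, r) = (-100 m / r) d + α Bᵀ s^{-1-α}` computed from edge
slacks `s` and residual `r`, where `(Bᵀ x)(v) = ∑_{tail e = v} x e - ∑_{head e = v} x e`. -/
def gradOf (tail head : E → V) (d : V → ℝ) (α : ℝ) (s : E → ℝ) (r : ℝ) (v : V) : ℝ :=
  (-100 * (Fintype.card E : ℝ) / r) * d v
    + α * ((∑ e, if tail e = v then s e ^ (-1 - α) else 0)
         - (∑ e, if head e = v then s e ^ (-1 - α) else 0))

/-- `‖U B Δ‖₁ = ∑_e s e^{-1-α} |Δ (tail e) - Δ (head e)|` with capacities `u(s) = s^{-1-α}`. -/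
def normOf (tail head : E → V) (α : ℝ) (s : E → ℝ) (Δ : V → ℝ) : ℝ :=
  ∑ e, s e ^ (-1 - α) * |Δ (tail e) - Δ (head e)|

/-- Pairing the vertex gradient with `Δ`, with `Bᵀ` moved onto `Δ`. -/
lemma sum_gradOf_mul (tail head : E → V) (d : V → ℝ) (α : ℝ) (s : E → ℝ) (r : ℝ) (Δ : V → ℝ) :
    ∑ v, gradOf tail head d α s r v * Δ v
      = (-100 * (Fintype.card E : ℝ) / r) * ∑ v, d v * Δ v
        + α * ∑ e, s e ^ (-1 - α) * (Δ (tail e) - Δ (head e)) := by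
  have key : ∀ f : E → V, ∑ v, (∑ e, if f e = v then s e ^ (-1 - α) else 0) * Δ v
      = ∑ e, s e ^ (-1 - α) * Δ (f e) := by
    intro f
    simp_rw [Finset.sum_mul]
    rw [Finset.sum_comm]
    simp [ite_mul]
  simp_rw [mul_sub, Finset.sum_sub_distrib, ← key, gradOf, add_mul, mul_sub, sub_mul,
    Finset.sum_add_distrib, Finset.sum_sub_distrib, mul_assoc, Finset.mul_sum]

/-- The capacity ratio: if `a / b` is within a factor `1 + ε` of `1`, then `b^{-1-α}` equals
`a^{-1-α}` up to a factor `(a / b)^{1+α}`, which is at least `1 - 2 ε` and at most `1 + 2.1 ε`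
as `1 + α ≤ 2` and `ε ≤ 1 / 10`. -/
lemma rpow_ratio_bounds {a b ε α : ℝ} (ha : 0 < a) (hb : 0 < b) (hε : 0 < ε) (hε1 : ε ≤ 1 / 10)
    (hα0 : 0 < α) (hα : α ≤ 1 / 10) (hlo : (1 + ε)⁻¹ ≤ a / b) (hhi : a / b ≤ 1 + ε) :
    ∃ t, b ^ (-1 - α) = t * a ^ (-1 - α) ∧ 1 - 2 * ε ≤ t ∧ t ≤ 1 + 2.1 * ε := by
  have hinv : 0 < (1 + ε)⁻¹ := by positivity
  have hinv1 : (1 + ε)⁻¹ ≤ 1 := inv_le_one_of_one_le₀ (by linarith)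
  refine ⟨(a / b) ^ (1 + α), ?_, ?_, ?_⟩
  · have hneg : -1 - α = -(1 + α) := by ring
    rw [hneg, Real.div_rpow ha.le hb.le, Real.rpow_neg ha.le, Real.rpow_neg hb.le]
    have := Real.rpow_pos_of_pos ha (1 + α)
    field_simp
  · have h1 : ((1 + ε)⁻¹) ^ (2 : ℝ) ≤ ((1 + ε)⁻¹) ^ (1 + α) :=
      Real.rpow_le_rpow_of_exponent_ge hinv hinv1 (by linarith)
    have h2 : ((1 + ε)⁻¹) ^ (1 + α) ≤ (a / b) ^ (1 + α) :=
      Real.rpow_le_rpow hinv.le hlo (by linarith)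
    rw [Real.rpow_two] at h1
    have h3 : 1 - ε ≤ (1 + ε)⁻¹ := by
      rw [← one_div, le_div_iff₀ (by linarith)]
      nlinarith
    nlinarith
  · have h1 : (a / b) ^ (1 + α) ≤ (1 + ε) ^ (1 + α) :=
      Real.rpow_le_rpow (by positivity) hhi (by linarith)
    have h2 : (1 + ε) ^ (1 + α) ≤ (1 + ε) ^ (2 : ℝ) :=
      Real.rpow_le_rpow_of_exponent_le (by linarith) (by linarith)
    rw [Real.rpow_two] at h2
    nlinarith

/-- **Slack and residual estimations suffice.**
Let `y` be feasible with slacks `s = c - B y > 0` and residual `r = F - ⟨d,y⟩ > 0`, and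
let `s̃, r̃ > 0` be multiplicative `(1 + 1/(10κ))`-approximations of `s` and `r`.  If a cut
direction `Δ` achieves ratio at most `-1/κ` for the approximate gradient/capacities, then
it achieves ratio at most `-1/(100κ)` for the exact ones. -/
theorem approx_slack_and_residual_suffice
    (tail head : E → V) (c : E → ℝ) (d : V → ℝ) (F κ α : ℝ)
    (hκ : 1 ≤ κ) (hα0 : 0 < α) (hα : α ≤ 1 / 10)
    (y : V → ℝ)
    (hs : ∀ e, 0 < c e - (y (tail e) - y (head e)))
    (hr : 0 < F - ∑ v, d v * y v)
    (st : E → ℝ) (rt : ℝ) (hst0 : ∀ e, 0 < st e) (hrt0 : 0 < rt)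
    (hst : ∀ e, (1 + 1 / (10 * κ))⁻¹ ≤ st e / (c e - (y (tail e) - y (head e))) ∧
      st e / (c e - (y (tail e) - y (head e))) ≤ 1 + 1 / (10 * κ))
    (hrt : (1 + 1 / (10 * κ))⁻¹ ≤ rt / (F - ∑ v, d v * y v) ∧
      rt / (F - ∑ v, d v * y v) ≤ 1 + 1 / (10 * κ))
    (Δ : V → ℝ)
    (hnorm : 0 < normOf tail head α st Δ)
    (hratio : (∑ v, gradOf tail head d α st rt v * Δ v) / normOf tail head α st Δ ≤ -1 / κ) :
    (∑ v, gradOf tail head d α (fun e => c e - (y (tail e) - y (head e)))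
        (F - ∑ w, d w * y w) v * Δ v)
      / normOf tail head α (fun e => c e - (y (tail e) - y (head e))) Δ
      ≤ -1 / (100 * κ) := by
  set s : E → ℝ := fun e => c e - (y (tail e) - y (head e)) with hs_def
  set r : ℝ := F - ∑ v, d v * y v
  have hκ0 : 0 < κ := by linarith
  obtain ⟨ε, hε⟩ : ∃ ε, ε = 1 / (10 * κ) := ⟨_, rfl⟩
  have hε0 : 0 < ε := by rw [hε]; positivity
  have hε1 : ε ≤ 1 / 10 := by
    rw [hε]; exact one_div_le_one_div_of_le (by norm_num) (by linarith)
  rw [← hε] at hst hrt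
  obtain ⟨ρ, hρ⟩ : ∃ ρ, ρ = rt / r := ⟨_, rfl⟩
  rw [← hρ] at hrt
  have hρlo : 1 - ε ≤ ρ := by
    refine le_trans ?_ hrt.1
    rw [← one_div, le_div_iff₀ (by linarith)]
    nlinarith
  have hρhi : ρ ≤ 1 + ε := hrt.2
  choose t ht htlo hthi using fun e =>
    rpow_ratio_bounds (hst0 e) (hs e) hε0 hε1 hα0 hα (hst e).1 (hst e).2
  rw [sum_gradOf_mul] at hratio ⊢
  set M := normOf tail head α st Δ with hM
  set N := normOf tail head α s Δ with hN
  have hterm : ∀ e, 0 ≤ st e ^ (-1 - α) * |Δ (tail e) - Δ (head e)| := fun e =>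
    mul_nonneg (Real.rpow_nonneg (hst0 e).le _) (abs_nonneg _)
  have hNM : N ≤ (1 + 2.1 * ε) * M := by
    rw [hN, hM, normOf, normOf, Finset.mul_sum]
    refine Finset.sum_le_sum fun e _ => ?_
    rw [ht e, mul_assoc]
    exact mul_le_mul_of_nonneg_right (hthi e) (hterm e)
  have hMN : (1 - 2 * ε) * M ≤ N := by
    rw [hN, hM, normOf, normOf, Finset.mul_sum]
    refine Finset.sum_le_sum fun e _ => ?_
    rw [ht e, mul_assoc]
    exact mul_le_mul_of_nonneg_right (htlo e) (hterm e)
  have hNpos : 0 < N := lt_of_lt_of_le (mul_pos (by linarith) hnorm) hMN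
  have hdiff : ∑ e, s e ^ (-1 - α) * (Δ (tail e) - Δ (head e))
      - ρ * ∑ e, st e ^ (-1 - α) * (Δ (tail e) - Δ (head e)) ≤ 4 * ε * M := by
    rw [hM, normOf, Finset.mul_sum, Finset.mul_sum, ← Finset.sum_sub_distrib]
    refine Finset.sum_le_sum fun e _ => ?_
    have hte : |t e - ρ| ≤ 4 * ε :=
      abs_le.2 ⟨by linarith [htlo e], by linarith [hthi e]⟩
    have hw : 0 ≤ st e ^ (-1 - α) := Real.rpow_nonneg (hst0 e).le _
    calc s e ^ (-1 - α) * (Δ (tail e) - Δ (head e))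
          - ρ * (st e ^ (-1 - α) * (Δ (tail e) - Δ (head e)))
        = (t e - ρ) * (st e ^ (-1 - α) * (Δ (tail e) - Δ (head e))) := by rw [ht e]; ring
      _ ≤ |t e - ρ| * (st e ^ (-1 - α) * |Δ (tail e) - Δ (head e)|) := by
          refine (le_abs_self _).trans_eq ?_
          rw [abs_mul, abs_mul, abs_of_nonneg hw]
      _ ≤ 4 * ε * (st e ^ (-1 - α) * |Δ (tail e) - Δ (head e)|) :=
          mul_le_mul_of_nonneg_right hte (hterm e)
  have hscale : -100 * (Fintype.card E : ℝ) / r = ρ * (-100 * (Fintype.card E : ℝ) / rt) := by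
    rw [hρ]; field_simp
  -- Everything is expressed in terms of `ε`, using `1 / κ = 10 ε`.
  have h10 : -1 / κ = -(10 * ε) := by rw [hε]; field_simp
  have h1000 : -1 / (100 * κ) = -(ε / 10) := by rw [hε]; field_simp; norm_num
  rw [h10, div_le_iff₀ hnorm] at hratio
  rw [h1000, div_le_iff₀ hNpos, hscale]
  set S := ∑ e, s e ^ (-1 - α) * (Δ (tail e) - Δ (head e))
  set T := ∑ e, st e ^ (-1 - α) * (Δ (tail e) - Δ (head e))
  have hεM : 0 < ε * M := mul_pos hε0 hnorm
  have h1 := mul_le_mul_of_nonneg_left hratio (show 0 ≤ ρ by linarith)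
  have h2 := mul_le_mul_of_nonneg_left hdiff hα0.le
  have h3 : α * (4 * ε * M) ≤ 0.4 * (ε * M) := by nlinarith
  have h4 : 9 * (ε * M) ≤ ρ * (10 * ε * M) := by nlinarith
  have h5 : ε * N ≤ 2 * (ε * M) := by nlinarith
  nlinarith

end
end

section
/- Let (G, c, u, d) be a min-cost flow instance with capacities u ∈ ℝ^{E(G)}_{>0} and let (H, c^H, d^H) be its induced weighted bipartite matching instance, with B and B_H the incidence matrices of G and H respectively. (i) If f ∈ ℝ^{E(G)} satisfies Bᵀf = d and 0 ≤ f ≤ u, then the flow f̄ ∈ ℝ^{E(H)} defined for each e = (u,v) ∈ E(G) by f̄(u, x_e) := f(e) and f̄(v, x_e) := u(e) − f(e) satisfies f̄ ≥ 0, B_Hᵀ f̄ = d^H, and ⟨c^H, f̄⟩ = ⟨c, f⟩. (ii) Conversely, if f̄ ∈ ℝ^{E(H)} satisfies f̄ ≥ 0 and B_Hᵀ f̄ = d^H, then the flow f' ∈ ℝ^{E(G)} defined by f'(e) := f̄(u, x_e) for e = (u,v) ∈ E(G) satisfies Bᵀf' = d, 0 ≤ f' ≤ u, and ⟨c, f'⟩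 = ⟨c^H, f̄⟩. -/
/-!
A flow on `H` has net outflow `∑_{tail e = w} f̄ (u, x_e) + ∑_{head e = w} f̄ (v, x_e)` at a vertex
`w` of `G` (`bip_net_inl`) and `-(f̄ (u, x_e) + f̄ (v, x_e))` at `x_e` (`bip_net_inr`). So the demand
at `x_e` says exactly that `f̄ (v, x_e) = u e - f̄ (u, x_e)`: the second edge carries the slack of the
capacity constraint at `e`, and its nonnegativity is that constraint. Substituting the slack, the
demand at `w` becomes conservation of `f̄ (u, x_·)` in `G` shifted by `∑_{head e = w} u e`
(`bip_slack_net`). Costs agree because the slack edges cost nothing (`bip_cost`).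
-/

open Finset

noncomputable section

variable {V E : Type*}

/-- Tails of the edges of the induced bipartite graph `H`: the edge `(u, x_e)`
(for `e = (u,v) ∈ E(G)`) is `Sum.inl e` and the edge `(v, x_e)` is `Sum.inr e`. -/
def bipTail (tail head : E → V) : E ⊕ E → V ⊕ E
  | Sum.inl e => Sum.inl (tail e)
  | Sum.inr e => Sum.inl (head e)

/-- Heads of the edges of `H`: both edges corresponding to `e ∈ E(G)` point to `x_e`. -/
def bipHead : E ⊕ E → V ⊕ E
  | Sum.inl e => Sum.inr e
  | Sum.inr e => Sum.inr e

/-- Costs of the edges of `H`: `c^H(u, x_e) = c e` and `c^H(v, x_e) = 0`. -/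
def bipCost (c : E → ℝ) : E ⊕ E → ℝ
  | Sum.inl e => c e
  | Sum.inr _ => 0

/-- Demands of `H`: `d^H(w) = d w + ∑_{head e = w} u e` for `w ∈ V(G)`,
and `d^H(x_e) = -u e` for `e ∈ E(G)`. -/
def bipDemand [Fintype E] [DecidableEq V] (head : E → V) (u : E → ℝ) (d : V → ℝ) :
    V ⊕ E → ℝ
  | Sum.inl w => d w + ∑ e, if head e = w then u e else 0
  | Sum.inr e => -(u e)

/-- Every edge of `H` points into `E`, so the net outflow of `g` at `w ∈ V(G)` is its outflow. -/
theorem bip_net_inl [Fintype E] [DecidableEq V] [DecidableEq E]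
    (tail head : E → V) (g : E ⊕ E → ℝ) (w : V) :
    ((∑ a, if bipTail tail head a = Sum.inl w then g a else 0)
      - ∑ a, if (bipHead a : V ⊕ E) = Sum.inl w then g a else 0)
      = (∑ e, if tail e = w then g (Sum.inl e) else 0)
        + ∑ e, if head e = w then g (Sum.inr e) else 0 := by
  simp [Fintype.sum_sum_type, bipTail, bipHead]

/-- The only edges of `H` at `x_e` are the two edges coming from `e`, both of them incoming. -/
theorem bip_net_inr [Fintype E] [DecidableEq V] [DecidableEq E]
    (tail head : E → V) (g : E ⊕ E → ℝ) (e : E) :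
    ((∑ a, if bipTail tail head a = Sum.inr e then g a else 0)
      - ∑ a, if (bipHead a : V ⊕ E) = Sum.inr e then g a else 0)
      = -(g (Sum.inl e) + g (Sum.inr e)) := by
  simp [Fintype.sum_sum_type, bipTail, bipHead]

theorem bip_cost [Fintype E] (c : E → ℝ) (g : E ⊕ E → ℝ) :
    (∑ a, bipCost c a * g a) = ∑ e, c e * g (Sum.inl e) := by
  simp [Fintype.sum_sum_type, bipCost]

/-- If the second edge of each `e` carries the slack `u e - f e`, its contribution at `w` is the
shift in the demand of `H` minus the inflow of `f`. -/
theorem bip_slack_net [Fintype E] [DecidableEq V] (head : E → V) (u f : E → ℝ) (w : V) :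
    (∑ e, if head e = w then u e - f e else 0)
      = (∑ e, if head e = w then u e else 0) - ∑ e, if head e = w then f e else 0 := by
  rw [← Finset.sum_sub_distrib]
  refine Finset.sum_congr rfl fun e _ => ?_
  split_ifs <;> simp

/-- **Equivalence of min-cost flow and its induced weighted bipartite matching instance.**
(i) a feasible flow `f` of the capacitated instance (`Bᵀ f = d`, `0 ≤ f ≤ u`) yields the
feasible flow `f̄ = Sum.elim f (u - f)` of the induced instance, of the same cost;
(ii) conversely, a feasible flow `f̄ ≥ 0` of the induced instance with `B_Hᵀ f̄ = d^H`
yields the feasible flow `f' e = f̄ (u, x_e)` of the original instance, of the same cost. -/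
theorem flow_equivalence [Fintype V] [Fintype E] [DecidableEq V] [DecidableEq E]
    (tail head : E → V) (c : E → ℝ) (u : E → ℝ) (hu : ∀ e, 0 < u e) (d : V → ℝ) :
    (∀ f : E → ℝ,
      (∀ w : V, ((∑ e, if tail e = w then f e else 0) - ∑ e, if head e = w then f e else 0)
        = d w) →
      (∀ e, 0 ≤ f e ∧ f e ≤ u e) →
      (∀ a : E ⊕ E, 0 ≤ Sum.elim f (fun e => u e - f e) a) ∧
      (∀ w : V ⊕ E,
        ((∑ a, if bipTail tail head a = w then Sum.elim f (fun e => u e - f e) a else 0)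
          - ∑ a, if bipHead a = w then Sum.elim f (fun e => u e - f e) a else 0)
          = bipDemand head u d w) ∧
      (∑ a, bipCost c a * Sum.elim f (fun e => u e - f e) a) = ∑ e, c e * f e) ∧
    (∀ fb : E ⊕ E → ℝ,
      (∀ a, 0 ≤ fb a) →
      (∀ w : V ⊕ E,
        ((∑ a, if bipTail tail head a = w then fb a else 0)
          - ∑ a, if bipHead a = w then fb a else 0) = bipDemand head u d w) →
      (∀ w : V, ((∑ e, if tail e = w then fb (Sum.inl e) else 0)
          - ∑ e, if head e = w then fb (Sum.inl e) else 0) = d w) ∧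
      (∀ e, 0 ≤ fb (Sum.inl e) ∧ fb (Sum.inl e) ≤ u e) ∧
      (∑ e, c e * fb (Sum.inl e)) = ∑ a, bipCost c a * fb a) := by
  refine ⟨fun f hd hf => ⟨?_, ?_, ?_⟩, fun fb h0 hd => ?_⟩
  · rintro (e | e)
    · exact (hf e).1
    · exact sub_nonneg.2 (hf e).2
  · rintro (w | e)
    · rw [bip_net_inl]
      simp only [Sum.elim_inl, Sum.elim_inr, bip_slack_net, bipDemand]
      linarith [hd w]
    · rw [bip_net_inr]
      simp [bipDemand]
  · rw [bip_cost]
    rfl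
  · have slack : ∀ e, fb (Sum.inr e) = u e - fb (Sum.inl e) := fun e => by
      have h := hd (Sum.inr e)
      rw [bip_net_inr] at h
      simp only [bipDemand] at h
      linarith
    refine ⟨fun w => ?_, fun e => ⟨h0 _, ?_⟩, (bip_cost c fb).symm⟩
    · have h := hd (Sum.inl w)
      rw [bip_net_inl] at h
      simp only [slack, bip_slack_net head u (fun e => fb (Sum.inl e)), bipDemand] at h
      linarith
    · linarith [h0 (Sum.inr e), slack e]

end
end

section
/- Let T = (V, E) be a finite tree and let R ⊆ V be a nonempty subset of its vertices. Then there exists a set B ⊆ V with R ⊆ B and |B| ≤ 2·|R| such that B is branch-free for T, i.e., the collection 𝒫_{T,B} of all tree paths T[a,b] with a, b ∈ B that contain no internal vertex in B consists of pairwise edge-disjoint paths. -/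
/-!
Root the tree at a vertex and order its vertices by "`v` lies on the path from the root to `w`".
This is a meet-semilattice in which the elements below any given one form a chain, and for
`m ≤ a` the tree path from `m` to `a` is the order interval `[m, a]`
(`exists_semilatticeInf`).

A finite set `R` in such a semilattice has a meet-closed superset with at most `2|R|` elements:
when a new element `x` joins a meet-closed `B`, the elements `x ⊓ b`, `b ∈ B`, all lie below `x`,
hence have a largest member `y`, and `B ∪ {x, y}` is meet-closed already
(`exists_inf_closed_superset`).

A meet-closed set `B` is branch-free. The tree path from `a` to `b` descends from `a` to `a ⊓ b`
and climbs to `b`, so if it has no internal vertex in `B`, then `a ⊓ b ∈ {a, b}` and the path is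
a chain `[bot, top]` meeting `B` only in its ends (`exists_bot_top`). If two such chains share an
edge with upper endpoint `v`, the meet of their tops lies above `v`, hence on both chains, and so
it equals both tops; the bottoms are then comparable elements of the same chain and agree as well.
-/

open SimpleGraph

/-- In a meet-semilattice whose principal lower sets are chains, every finite set has a
meet-closed superset of at most twice its size. -/
lemma exists_inf_closed_superset {α : Type*} [SemilatticeInf α] [DecidableEq α]
    (chain : ∀ x y z : α, x ≤ z → y ≤ z → x ≤ y ∨ y ≤ x) (R : Finset α) :
    ∃ B : Finset α, R ⊆ B ∧ B.card ≤ 2 * R.card ∧ ∀ a ∈ B, ∀ b ∈ B, a ⊓ b ∈ B := by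
  induction R using Finset.induction_on with
  | empty => exact ⟨∅, by simp⟩
  | insert x R hx ih =>
    obtain ⟨B, hRB, hcard, hB⟩ := ih
    rcases B.eq_empty_or_nonempty with rfl | hne
    · have : R = ∅ := Finset.subset_empty.1 hRB
      subst this
      exact ⟨{x}, by simp⟩
    -- `y = x ⊓ b₀` is the largest of the meets of `x` with elements of `B`
    obtain ⟨b₀, hb₀, hy⟩ : ∃ b₀ ∈ B, ∀ b ∈ B, x ⊓ b ≤ x ⊓ b₀ := by
      obtain ⟨y, hy⟩ := (B.image (x ⊓ ·)).exists_maximal (hne.image _)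
      obtain ⟨b₀, hb₀, rfl⟩ := Finset.mem_image.1 hy.1
      refine ⟨b₀, hb₀, fun b hb => ?_⟩
      rcases chain (x ⊓ b) (x ⊓ b₀) x inf_le_left inf_le_left with h | h
      · exact h
      · exact hy.2 (Finset.mem_image_of_mem _ hb) h
    have key : ∀ b ∈ B, x ⊓ b = x ⊓ b₀ ∨ x ⊓ b ∈ B := by
      intro b hb
      rcases chain (b ⊓ b₀) (x ⊓ b₀) b₀ inf_le_right inf_le_right with h | h
      · right
        have : x ⊓ b = b ⊓ b₀ := le_antisymm
          (le_inf inf_le_right ((hy b hb).trans inf_le_right))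
          (le_inf (h.trans inf_le_left) inf_le_left)
        rw [this]
        exact hB b hb b₀ hb₀
      · left
        exact le_antisymm (hy b hb) (le_inf inf_le_left (h.trans inf_le_left))
    have keyy : ∀ b ∈ B, (x ⊓ b₀) ⊓ b = x ⊓ b := fun b hb => le_antisymm
      (inf_le_inf_right _ inf_le_left) (le_inf (hy b hb) inf_le_right)
    have hxb : ∀ b ∈ B, x ⊓ b ∈ insert x (insert (x ⊓ b₀) B) := by
      intro b hb
      rcases key b hb with h | h <;> simp [h]
    refine ⟨insert x (insert (x ⊓ b₀) B), ?_, ?_, ?_⟩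
    · exact Finset.insert_subset_insert _ (hRB.trans (Finset.subset_insert _ _))
    · have h1 := Finset.card_insert_le x (insert (x ⊓ b₀) B)
      have h2 := Finset.card_insert_le (x ⊓ b₀) B
      rw [Finset.card_insert_of_notMem hx]
      omega
    · intro a ha b hb
      rw [Finset.mem_insert, Finset.mem_insert] at ha hb
      rcases ha with ha | ha | ha <;> rcases hb with hb | hb | hb
      · simp [ha, hb]
      · simp [ha, hb]
      · rw [ha]; exact hxb b hb
      · simp [ha, hb]
      · simp [ha, hb]
      · rw [ha, keyy b hb]; exact hxb b hb
      · rw [hb, inf_comm a x]; exact hxb a ha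
      · rw [hb, inf_comm a, keyy a ha]; exact hxb a ha
      · exact Finset.mem_insert_of_mem (Finset.mem_insert_of_mem (hB a ha b hb))

/-- The order of a finite tree rooted at `r`, where `v ≤ w` means that `v` lies on the path from
`r` to `w`. The root itself does not occur in the conclusion: the description of the paths
between comparable vertices is all that is needed. -/
lemma exists_semilatticeInf {V : Type*} [Fintype V] [DecidableEq V]
    (T : SimpleGraph V) (hT : T.IsTree) (r : V) :
    ∃ _ : SemilatticeInf V, (∀ x y z : V, x ≤ z → y ≤ z → x ≤ y ∨ y ≤ x) ∧
      ∀ m a : V, m ≤ a → ∀ p : T.Walk m a, p.IsPath →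
        ∀ z, z ∈ p.support ↔ m ≤ z ∧ z ≤ a := by
  classical
  choose P hP hPu using fun v => hT.existsUnique_path r v
  let le : V → V → Prop := fun v w => v ∈ (P w).support
  have split : ∀ v w, le v w → ∃ q : T.Walk v w, q.IsPath ∧ P w = (P v).append q := by
    intro v w h
    refine ⟨(P w).dropUntil v h, (hP w).dropUntil h, ?_⟩
    rw [← hPu v _ ((hP w).takeUntil h), Walk.take_spec]
  have mid : ∀ m a (q : T.Walk m a), P a = (P m).append q →
      ∀ z ∈ q.support, le m z := by
    intro m a q hq z hz
    have h1 : ((P m).append (q.takeUntil z hz)).IsPath := by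
      apply Walk.IsPath.of_append_left (q := q.dropUntil z hz)
      rw [← Walk.append_assoc, Walk.take_spec, ← hq]
      exact hP a
    change m ∈ (P z).support
    rw [← hPu z _ h1]
    simp
  have hrefl : ∀ v, le v v := fun v => Walk.end_mem_support _
  have htrans : ∀ u v w, le u v → le v w → le u w := by
    intro u v w h1 h2
    obtain ⟨q, -, hq⟩ := split v w h2
    change u ∈ (P w).support
    rw [hq, Walk.mem_support_append_iff]
    exact Or.inl h1
  have hanti : ∀ v w, le v w → le w v → v = w := by
    intro v w h1 h2
    obtain ⟨q, -, hq⟩ := split v w h1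
    obtain ⟨q', -, hq'⟩ := split w v h2
    have e1 := congrArg Walk.length hq
    have e2 := congrArg Walk.length hq'
    rw [Walk.length_append] at e1 e2
    exact Walk.eq_of_length_eq_zero (p := q) (by omega)
  have hchain : ∀ x y z, le x z → le y z → le x y ∨ le y x := by
    intro x y z hx hy
    obtain ⟨q, -, hq⟩ := split x z hx
    have hy' : y ∈ (P z).support := hy
    rw [hq, Walk.mem_support_append_iff] at hy'
    rcases hy' with h | h
    · exact Or.inr h
    · exact Or.inl (mid x z q hq y h)
  let po : PartialOrder V :=
    { le := le, le_refl := hrefl, le_trans := htrans, le_antisymm := hanti }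
  -- a maximal common lower bound is a greatest one, because lower sets are chains
  have hmeet : ∀ a b : V, ∃ m : V, m ≤ a ∧ m ≤ b ∧ ∀ z, z ≤ a → z ≤ b → z ≤ m := by
    intro a b
    obtain ⟨m, hm⟩ := (Finset.univ.filter fun z : V => z ≤ a ∧ z ≤ b).exists_maximal
      ⟨r, by simpa using ⟨Walk.start_mem_support (P a), Walk.start_mem_support (P b)⟩⟩
    have hm1 : m ≤ a ∧ m ≤ b := by simpa using hm.1
    refine ⟨m, hm1.1, hm1.2, fun z hza hzb => ?_⟩
    rcases hchain z m a hza hm1.1 with h | h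
    · exact h
    · exact hm.2 (by simpa using ⟨hza, hzb⟩) h
  choose inf h1 h2 h3 using hmeet
  let S : SemilatticeInf V :=
    { po with
      inf := inf
      inf_le_left := h1
      inf_le_right := h2
      le_inf := fun a b c hab hac => h3 b c a hab hac }
  refine ⟨S, hchain, ?_⟩
  intro m a hma p hp z
  obtain ⟨q, hqp, hq⟩ := split m a hma
  obtain rfl : p = q := (hT.existsUnique_path m a).unique hp hqp
  constructor
  · intro hz
    refine ⟨mid m a p hq z hz, ?_⟩
    change z ∈ (P a).support
    rw [hq, Walk.mem_support_append_iff]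
    exact Or.inr hz
  · rintro ⟨hmz, hza⟩
    have hza' : z ∈ (P a).support := hza
    rw [hq, Walk.mem_support_append_iff] at hza'
    rcases hza' with h | h
    · obtain rfl : z = m := hanti z m h hmz
      exact p.start_mem_support
    · exact h

/-- In a rooted tree, a path without internal vertices in the meet-closed set `B` is vertical:
the endpoints of each of its edges are comparable, its ends are `bot < v ≤ top`, where `v` is the
upper endpoint of such an edge, and `B` meets the interval `[bot, top]` only in its ends. -/
lemma exists_bot_top {V : Type*} [DecidableEq V] [SemilatticeInf V]
    (T : SimpleGraph V) (hT : T.IsTree)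
    (chain : ∀ x y z : V, x ≤ z → y ≤ z → x ≤ y ∨ y ≤ x)
    (interval : ∀ m a : V, m ≤ a → ∀ p : T.Walk m a, p.IsPath →
        ∀ z, z ∈ p.support ↔ m ≤ z ∧ z ≤ a)
    (B : Finset V) (hB : ∀ a ∈ B, ∀ b ∈ B, a ⊓ b ∈ B)
    (a b : V) (ha : a ∈ B) (hb : b ∈ B) (p : T.Walk a b) (hp : p.IsPath)
    (hfree : ∀ v ∈ p.support, v ≠ a → v ≠ b → v ∉ B)
    (u v : V) (he : s(u, v) ∈ p.edges) :
    (u ≤ v ∨ v ≤ u) ∧ (u ≤ v → ∃ bot ∈ B, ∃ top ∈ B, s(a, b) = s(bot, top) ∧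
      bot ≤ v ∧ bot ≠ v ∧ v ≤ top ∧
      ∀ x ∈ B, bot ≤ x → x ≤ top → x = bot ∨ x = top) := by
  have huv : u ≠ v := (p.adj_of_mem_edges he).ne
  obtain ⟨pa, hpa, -⟩ := hT.existsUnique_path (a ⊓ b) a
  obtain ⟨pb, hpb, -⟩ := hT.existsUnique_path (a ⊓ b) b
  have ia := interval _ _ inf_le_left pa hpa
  have ib := interval _ _ inf_le_right pb hpb
  have hpath : (pa.reverse.append pb).IsPath := by
    rw [Walk.isPath_def, Walk.support_append, List.nodup_append']
    refine ⟨hpa.reverse.support_nodup, hpb.support_nodup.tail, ?_⟩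
    intro z hz1 hz2
    rw [Walk.support_reverse, List.mem_reverse, ia] at hz1
    have hz3 := (ib z).1 (List.mem_of_mem_tail hz2)
    obtain rfl : z = a ⊓ b := le_antisymm (le_inf hz1.2 hz3.2) hz1.1
    have := hpb.support_nodup
    rw [← Walk.cons_tail_support] at this
    exact (List.nodup_cons.1 this).1 hz2
  obtain rfl : p = pa.reverse.append pb := (hT.existsUnique_path a b).unique hp hpath
  have hsupp : ∀ z, z ∈ (pa.reverse.append pb).support ↔
      (a ⊓ b ≤ z ∧ z ≤ a) ∨ (a ⊓ b ≤ z ∧ z ≤ b) := by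
    intro z
    rw [Walk.mem_support_append_iff, Walk.support_reverse, List.mem_reverse, ia, ib]
  have hfree' : ∀ x ∈ B, (a ⊓ b ≤ x ∧ x ≤ a) ∨ (a ⊓ b ≤ x ∧ x ≤ b) → x = a ∨ x = b := by
    intro x hx h
    by_contra hne
    rw [not_or] at hne
    exact hfree x ((hsupp x).2 h) hne.1 hne.2 hx
  have hm : a ⊓ b = a ∨ a ⊓ b = b :=
    hfree' _ (hB a ha b hb) (Or.inl ⟨le_rfl, inf_le_left⟩)
  rw [Walk.edges_append, Walk.edges_reverse, List.mem_append, List.mem_reverse] at he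
  rcases he with he | he
  · have hu := (ia u).1 (pa.fst_mem_support_of_mem_edges he)
    have hv := (ia v).1 (pa.snd_mem_support_of_mem_edges he)
    refine ⟨chain u v a hu.2 hv.2, fun hle => ?_⟩
    have hne : a ⊓ b ≠ v := fun h => huv (le_antisymm hle (h ▸ hu.1))
    rcases hm with hm | hm
    · exact absurd (le_antisymm hv.1 (hm.symm ▸ hv.2)) hne
    · rw [hm] at hv hne hfree'
      exact ⟨b, hb, a, ha, Sym2.eq_swap, hv.1, hne, hv.2,
        fun x hx h1 h2 => (hfree' x hx (Or.inl ⟨h1, h2⟩)).symm⟩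
  · have hu := (ib u).1 (pb.fst_mem_support_of_mem_edges he)
    have hv := (ib v).1 (pb.snd_mem_support_of_mem_edges he)
    refine ⟨chain u v b hu.2 hv.2, fun hle => ?_⟩
    have hne : a ⊓ b ≠ v := fun h => huv (le_antisymm hle (h ▸ hu.1))
    rcases hm with hm | hm
    · rw [hm] at hv hne hfree'
      exact ⟨a, ha, b, hb, rfl, hv.1, hne, hv.2,
        fun x hx h1 h2 => hfree' x hx (Or.inr ⟨h1, h2⟩)⟩
    · exact absurd (le_antisymm hv.1 (hm.symm ▸ hv.2)) hne

/-- **Existence of a branch-free extension.**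
Let `T` be a finite tree and `R` a nonempty set of its vertices.  Then there is a set
`B ⊇ R` of vertices with `|B| ≤ 2|R|` that is branch-free for `T`: any two distinct
paths of the collection `𝒫_{T,B}` — tree paths between vertices of `B` having no
internal vertex in `B` — are edge-disjoint.  (In a tree the path between two vertices is
unique, so the paths of `𝒫_{T,B}` are indexed by their unordered endpoint pairs.) -/
theorem exists_branch_free_extension
    {V : Type*} [Fintype V] [DecidableEq V]
    (T : SimpleGraph V) (hT : T.IsTree)
    (R : Finset V) (hR : R.Nonempty) :
    ∃ B : Finset V, R ⊆ B ∧ B.card ≤ 2 * R.card ∧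
      ∀ a b a' b' : V, a ∈ B → b ∈ B → a' ∈ B → b' ∈ B →
        ∀ (p : T.Walk a b) (q : T.Walk a' b'), p.IsPath → q.IsPath →
          (∀ v ∈ p.support, v ≠ a → v ≠ b → v ∉ B) →
          (∀ v ∈ q.support, v ≠ a' → v ≠ b' → v ∉ B) →
          s(a, b) ≠ s(a', b') →
          ∀ e : Sym2 V, e ∈ p.edges → e ∉ q.edges := by
  obtain ⟨r, -⟩ := hR
  obtain ⟨_, chain, interval⟩ := exists_semilatticeInf T hT r
  obtain ⟨B, hRB, hcard, hB⟩ := exists_inf_closed_superset chain R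
  refine ⟨B, hRB, hcard, ?_⟩
  intro a b a' b' ha hb ha' hb' p q hp hq hpf hqf hne e
  -- the shared edge, written with its upper endpoint second
  have main : ∀ u v : V, u ≤ v → s(u, v) ∈ p.edges → s(u, v) ∈ q.edges → False := by
    intro u v huv hep heq
    obtain ⟨c, hc, t, ht, hct, hcv, hcv', hvt, hf⟩ :=
      (exists_bot_top T hT chain interval B hB a b ha hb p hp hpf u v hep).2 huv
    obtain ⟨c', hc', t', ht', hct', hc'v, hcv'', hvt', hf'⟩ :=
      (exists_bot_top T hT chain interval B hB a' b' ha' hb' q hq hqf u v heq).2 huv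
    have hvtt : v ≤ t ⊓ t' := le_inf hvt hvt'
    have e1 : t ⊓ t' = t :=
      (hf _ (hB t ht t' ht') (hcv.trans hvtt) inf_le_left).resolve_left
        fun h => hcv' (le_antisymm hcv (h ▸ hvtt))
    have e2 : t ⊓ t' = t' :=
      (hf' _ (hB t ht t' ht') (hc'v.trans hvtt) inf_le_right).resolve_left
        fun h => hcv'' (le_antisymm hc'v (h ▸ hvtt))
    obtain rfl : t = t' := e1.symm.trans e2
    have e3 : c = c' := by
      rcases chain c c' v hcv hc'v with h | h
      · exact ((hf c' hc' h (hc'v.trans hvt)).resolve_right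
          fun h' => hcv'' (le_antisymm hc'v (h' ▸ hvt))).symm
      · exact (hf' c hc h (hcv.trans hvt)).resolve_right
          fun h' => hcv' (le_antisymm hcv (h' ▸ hvt))
    exact hne (by rw [hct, hct', e3])
  induction e using Sym2.ind with
  | _ u v =>
    intro hep heq
    rcases (exists_bot_top T hT chain interval B hB a b ha hb p hp hpf u v hep).1 with h | h
    · exact main u v h hep heq
    · rw [Sym2.eq_swap] at hep heq
      exact main v u h hep heq
end

section
/- Let G=(V,E) be a finite directed graph with m = |E| ≥ 2 edges, C ≥ 2, α = 1/(1000·log(mC)), costs c ∈ ℝ^E, demand d ∈ ℝ^V, and threshold F ∈ ℝ. Let y ∈ ℝ^V satisfy c − By > 0 entrywise, Φ(y) ≤ 1000·m·log(mC), and ⟨d, y⟩ ≤ F − (mC)^{−10}. Then for every edge e ∈ E, (c(e) − (By)(e))^{−1} ≤ (2000·m·log(mC))^{1000·log(mC)}; that is, every slack satisfies c(e) − (By)(e) ≥ (2000·m·log(mC))^{−1000·log(mC)}. -/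
/-!
Since the gap `F - ⟨d,y⟩` is at least `(m C)^{-10}`, the logarithmic part of the potential is at
least `-1000 m log (m C)`. The bound on `Φ` then leaves at most `K = 2000 m log (m C)` for the
barrier sum, all of whose terms are positive, so every single term satisfies `s(e)^{-α} ≤ K`.
Raising this to the power `1/α = 1000 log (m C)` gives the bound on `s(e)⁻¹`, and inverting it
gives the lower bound on the slack.
-/

open Finset Real

noncomputable section

variable {V E : Type*} [Fintype V] [Fintype E]

/-- **Slacks stay quasipolynomially bounded away from zero.**
With `m = |E| ≥ 2`, `C ≥ 2`, `α = 1/(1000 log (m C))`, a feasible `y` with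
`Φ(y) ≤ 1000 m log (m C)` and `⟨d,y⟩ ≤ F - (m C)^{-10}`, every edge satisfies
`(c e - (B y) e)⁻¹ ≤ (2000 m log (m C))^{1000 log (m C)}`, i.e.
`c e - (B y) e ≥ (2000 m log (m C))^{-1000 log (m C)}`. -/
theorem slack_lower_bound
    (tail head : E → V) (c : E → ℝ) (d : V → ℝ) (F C : ℝ)
    (hm : 2 ≤ Fintype.card E) (hC : 2 ≤ C)
    (α : ℝ) (hα : α = 1 / (1000 * Real.log ((Fintype.card E : ℝ) * C)))
    (y : V → ℝ)
    (hfeas : ∀ e, 0 < dualSlack tail head c y e)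
    (hΦ : dualPhi tail head c d F α y
      ≤ 1000 * (Fintype.card E : ℝ) * Real.log ((Fintype.card E : ℝ) * C))
    (hgap : ∑ v, d v * y v ≤ F - ((Fintype.card E : ℝ) * C) ^ (-10 : ℝ)) :
    ∀ e : E,
      (dualSlack tail head c y e)⁻¹
        ≤ (2000 * (Fintype.card E : ℝ) * Real.log ((Fintype.card E : ℝ) * C))
            ^ (1000 * Real.log ((Fintype.card E : ℝ) * C)) ∧
      (2000 * (Fintype.card E : ℝ) * Real.log ((Fintype.card E : ℝ) * C))
          ^ (-(1000 * Real.log ((Fintype.card E : ℝ) * C)))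
        ≤ dualSlack tail head c y e := by
  intro e
  have hmR : (2 : ℝ) ≤ (Fintype.card E : ℝ) := by exact_mod_cast hm
  unfold dualPhi at hΦ
  set m : ℝ := (Fintype.card E : ℝ)
  have hmC : 1 < m * C := by nlinarith
  set L := Real.log (m * C) with hL
  have hLpos : 0 < L := Real.log_pos hmC
  set s := dualSlack tail head c y e
  have hs : 0 < s := hfeas e
  have hlog : -10 * L ≤ Real.log (F - ∑ v, d v * y v) := by
    rw [hL, ← Real.log_rpow (by linarith)]
    exact Real.log_le_log (Real.rpow_pos_of_pos (by linarith) _) (by linarith)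
  have hterm : s ^ (-α) ≤ ∑ e, dualSlack tail head c y e ^ (-α) :=
    Finset.single_le_sum (f := fun e => dualSlack tail head c y e ^ (-α))
      (fun i _ => (Real.rpow_pos_of_pos (hfeas i) _).le) (Finset.mem_univ e)
  have hK : s ^ (-α) ≤ 2000 * m * L := by
    have := mul_le_mul_of_nonneg_left hlog (show 0 ≤ 100 * m by linarith)
    linarith
  have hinv : s⁻¹ ≤ (2000 * m * L) ^ (1000 * L) := by
    have hexp : -α * (1000 * L) = -1 := by
      rw [hα]
      field_simp
    calc s⁻¹ = (s ^ (-α)) ^ (1000 * L) := by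
          rw [← Real.rpow_mul hs.le, hexp, Real.rpow_neg_one]
      _ ≤ (2000 * m * L) ^ (1000 * L) :=
          Real.rpow_le_rpow (Real.rpow_pos_of_pos hs _).le hK (by positivity)
  refine ⟨hinv, ?_⟩
  rw [Real.rpow_neg (by positivity)]
  exact inv_le_of_inv_le₀ hs hinv

end
end
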